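/- For every Z ⊆ V(G) with |Z| ≥ 2: Pr[φ ∈ 𝒮 and the image of φ is contained in Z] ≤ ((k−1)^{k−1} l^l/(m−1)^{m−1}) · μ(Z)² · (ρ(Z)/2) · max_{z ∈ Z} (ρ_Z(z))^{m−1}. -/

import Mathlib

open scoped BigOperators

/-- The arc relation of the oriented star `S_{k,l}` on `Fin (k+l+1)`:
vertex `0` is the center, vertices `1,…,k` are the out-leaves and
vertices `k+1,…,k+l` are the in-leaves. -/
def StarArc (k l : ℕ) (a b : Fin (k + l + 1)) : Prop :=
  (a.val = 0 ∧ 1 ≤ b.val ∧ b.val ≤ k) ∨ (b.val = 0 ∧ k + 1 ≤ a.val)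

/-- `φ` witnesses an induced copy of `S_{k,l}` in the digraph with arc relation `A`:
it is injective and maps arcs to arcs and non-arcs to non-arcs. -/
def IsStarEmb (k l : ℕ) {V : Type*} (A : V → V → Prop) (φ : Fin (k + l + 1) → V) : Prop :=
  Function.Injective φ ∧ ∀ a b, StarArc k l a b ↔ A (φ a) (φ b)

/-- `s(G)`: the probability that a uniformly random map `V(S_{k,l}) → V(G)`
induces a copy of `S_{k,l}`. -/
noncomputable def starProb (k l : ℕ) (V : Type*) [Fintype V] (A : V → V → Prop) : ℝ :=
  (Nat.card {φ : Fin (k + l + 1) → V // IsStarEmb k l A φ} : ℝ) /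
    (Fintype.card V : ℝ) ^ (k + l + 1)

/-- The probability that a uniformly random map induces a copy of `S_{k,l}`
and moreover has property `P`. -/
noncomputable def starProbOn (k l : ℕ) {V : Type*} [Fintype V] (A : V → V → Prop)
    (P : (Fin (k + l + 1) → V) → Prop) : ℝ :=
  (Nat.card {φ : Fin (k + l + 1) → V // IsStarEmb k l A φ ∧ P φ} : ℝ) /
    (Fintype.card V : ℝ) ^ (k + l + 1)

/-- `s(z→v) = Pr[φ ∈ 𝒮 | φ z = v]`. -/
noncomputable def sCond (k l : ℕ) {V : Type*} [Fintype V] (A : V → V → Prop)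
    (z : Fin (k + l + 1)) (v : V) : ℝ :=
  (Nat.card {φ : Fin (k + l + 1) → V // IsStarEmb k l A φ ∧ φ z = v} : ℝ) /
    (Fintype.card V : ℝ) ^ (k + l)

/-- `Pr[φ ∈ 𝒮 ∧ P φ | φ(c) = v]`, where `c = 0` is the center of the star. -/
noncomputable def sCondOn (k l : ℕ) {V : Type*} [Fintype V] (A : V → V → Prop) (v : V)
    (P : (Fin (k + l + 1) → V) → Prop) : ℝ :=
  (Nat.card {φ : Fin (k + l + 1) → V // IsStarEmb k l A φ ∧ φ 0 = v ∧ P φ} : ℝ) /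
    (Fintype.card V : ℝ) ^ (k + l)

/-- `s(v) = (s(c→v) + l·s(i→v) + k·s(o→v))/(m+1)`, where the center is `0`,
`k+1` is an in-leaf and `1` is an out-leaf. -/
noncomputable def sVert (k l : ℕ) {V : Type*} [Fintype V] (A : V → V → Prop) (v : V) : ℝ :=
  (sCond k l A 0 v + l * sCond k l A (Fin.ofNat (k + l + 1) (k + 1)) v
      + k * sCond k l A 1 v) / ((k : ℝ) + l + 1)

/-- `ρ(v)`: the proportion of vertices adjacent to `v`. -/
noncomputable def rho {V : Type*} [Fintype V] (A : V → V → Prop) (v : V) : ℝ :=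
  (Nat.card {u : V // A v u ∨ A u v} : ℝ) / (Fintype.card V : ℝ)

/-- `ρ⁺_B(v)`: the proportion of vertices that are out-neighbours of `v` lying in `B`. -/
noncomputable def rhoPIn {V : Type*} [Fintype V] (A : V → V → Prop) (B : Set V) (v : V) : ℝ :=
  (Nat.card {u : V // A v u ∧ u ∈ B} : ℝ) / (Fintype.card V : ℝ)

/-- `ρ⁻_B(v)`: the proportion of vertices that are in-neighbours of `v` lying in `B`. -/
noncomputable def rhoMIn {V : Type*} [Fintype V] (A : V → V → Prop) (B : Set V) (v : V) : ℝ :=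
  (Nat.card {u : V // A u v ∧ u ∈ B} : ℝ) / (Fintype.card V : ℝ)

/-- `ρ_B(v)`: the proportion of vertices adjacent to `v` lying in `B`. -/
noncomputable def rhoIn {V : Type*} [Fintype V] (A : V → V → Prop) (B : Set V) (v : V) : ℝ :=
  (Nat.card {u : V // (A v u ∨ A u v) ∧ u ∈ B} : ℝ) / (Fintype.card V : ℝ)

/-- `μ(B) = |B|/n`. -/
noncomputable def muSet {V : Type*} [Fintype V] (B : Set V) : ℝ :=
  (Nat.card B : ℝ) / (Fintype.card V : ℝ)

/-- `X`: the set of vertices of large degree, `ρ(v) ≥ 1/2`. -/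
def bigX {V : Type*} [Fintype V] (A : V → V → Prop) : Set V := {v | 1 / 2 ≤ rho A v}

/-- `Y = V(G) \ X`. -/
def bigY {V : Type*} [Fintype V] (A : V → V → Prop) : Set V := (bigX A)ᶜ

/-- `α = μ(X)`. -/
noncomputable def alphaX {V : Type*} [Fintype V] (A : V → V → Prop) : ℝ := muSet (bigX A)

/-- `D = min_{x ∈ X} ρ(x)`. -/
noncomputable def Dmin {V : Type*} [Fintype V] (A : V → V → Prop) : ℝ :=
  sInf (rho A '' bigX A)

/-- `β = max_{y ∈ Y} ρ_Y(y)`. -/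
noncomputable def betaY {V : Type*} [Fintype V] (A : V → V → Prop) : ℝ :=
  sSup ((fun y => rhoIn A (bigY A) y) '' bigY A)

/-- `γ = min_{x ∈ X} ρ⁻_Y(x)`. -/
noncomputable def gammaX {V : Type*} [Fintype V] (A : V → V → Prop) : ℝ :=
  sInf ((fun x => rhoMIn A (bigY A) x) '' bigX A)

/-- `S = (m+1)·min_{v ∈ V(G)} s(v)`. -/
noncomputable def Smin (k l : ℕ) {V : Type*} [Fintype V] (A : V → V → Prop) : ℝ :=
  ((k : ℝ) + l + 1) * sInf (Set.range (sVert k l A))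

/-- `S₁ = min_{x ∈ X} (ρ⁺_Y(x))^k (ρ⁻_Y(x))^l`. -/
noncomputable def S1min (k l : ℕ) {V : Type*} [Fintype V] (A : V → V → Prop) : ℝ :=
  sInf ((fun x => rhoPIn A (bigY A) x ^ k * rhoMIn A (bigY A) x ^ l) '' bigX A)

/-- `S₂ = S₁ − ((m−1)/((m+1)·C(m,k)))·(α+β)(1−α)(1−D)^{m−2}`. -/
noncomputable def S2min (k l : ℕ) {V : Type*} [Fintype V] (A : V → V → Prop) : ℝ :=
  S1min k l A - (((k : ℝ) + l - 1) / (((k : ℝ) + l + 1) * (Nat.choose (k + l) k : ℝ)))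
    * (alphaX A + betaY A) * (1 - alphaX A) * (1 - Dmin A) ^ (k + l - 2)

/-- `λ₀ = k^k l^l / m^m`. -/
noncomputable def lam0 (k l : ℕ) : ℝ := (k : ℝ) ^ k * (l : ℝ) ^ l / ((k : ℝ) + l) ^ (k + l)

/-- `λ₁ = k^k l (l−1)^{l−1} / (m−1)^{m−1}` (with the convention `0⁰ = 1`). -/
noncomputable def lam1 (k l : ℕ) : ℝ :=
  (k : ℝ) ^ k * (l : ℝ) * ((l : ℝ) - 1) ^ (l - 1) / ((k : ℝ) + l - 1) ^ (k + l - 1)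

/-- The edge density `ρ(Z)` of a set of vertices `Z`: the number of unordered adjacent
pairs in `Z` divided by `C(|Z|,2)`. -/
noncomputable def densSet {V : Type*} [Fintype V] (A : V → V → Prop) (Z : Set V) : ℝ :=
  ((Nat.card {p : V × V // p.1 ∈ Z ∧ p.2 ∈ Z ∧ (A p.1 p.2 ∨ A p.2 p.1)} : ℝ) / 2) /
    (Nat.choose (Nat.card Z) 2 : ℝ)

/-- `d = 1 − (E_{x ∈ X} ρ⁻_Y(x))/(1−α)`. -/
noncomputable def dXY {V : Type*} [Fintype V] (A : V → V → Prop) : ℝ :=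
  1 - ((∑ᶠ x ∈ bigX A, rhoMIn A (bigY A) x) / (Nat.card (bigX A) : ℝ)) / (1 - alphaX A)

/-- `OPT(k,l)`. -/
noncomputable def OPT (k l : ℕ) : ℝ :=
  if k = l then
    (1 / 2 ^ (2 * k)) *
      sSup {y : ℝ | ∃ a ∈ Set.Icc (0 : ℝ) 1, y = a * (1 - a) ^ (2 * k) + (1 - a) * a ^ (2 * k)}
  else
    sSup {y : ℝ | ∃ a ∈ Set.Icc (0 : ℝ) (1 / 2),
      ∃ d ∈ Set.Icc (0 : ℝ) ((k : ℝ) / ((k : ℝ) + (l : ℝ))),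
      y = a * (1 - a) ^ (k + l) * d ^ k * (1 - d) ^ l
        + (((k : ℝ) - 1) ^ (k - 1) * (l : ℝ) ^ l / ((k : ℝ) + (l : ℝ) - 1) ^ (k + l - 1))
          * (1 - a) * a ^ (k + l) * (1 - d)}

/-!
Choosing an induced star inside `Z` with centre `v` amounts to choosing `k` out-leaves and `l`
in-leaves in `Z`, each joined to `v` by a single arc. If `v` has `p` and `q` such neighbours, there
are at most `p ^ k * q ^ l` choices. Keep one factor `p` and bound `p ^ (k - 1) * q ^ l` by weighted
AM-GM in terms of `p + q`, hence of the degree of `v` in `Z`. The factors `p`, summed over `v ∈ Z`,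
count each adjacent pair of `Z` at most once, which produces the edge density.
-/

theorem pow_mul_pow_le_weighted_mean_pow (s t : ℕ) {x y : ℝ} (hx : 0 ≤ x) (hy : 0 ≤ y) :
    x ^ s * y ^ t ≤ ((s * x + t * y) / (s + t)) ^ (s + t) := by
  obtain hst | hst := Nat.eq_zero_or_pos (s + t)
  · obtain ⟨rfl, rfl⟩ := Nat.add_eq_zero_iff.mp hst
    simp
  have hst' : (0 : ℝ) < s + t := by exact_mod_cast hst
  have rpow_div_pow (z : ℝ) (r : ℕ) (hz : 0 ≤ z) : (z ^ (r / (s + t) : ℝ)) ^ (s + t) = z ^ r := by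
    rw [← Real.rpow_mul_natCast hz, Nat.cast_add, div_mul_cancel₀ _ hst'.ne', Real.rpow_natCast]
  have amgm : x ^ (s / (s + t) : ℝ) * y ^ (t / (s + t) : ℝ) ≤ (s * x + t * y) / (s + t) := by
    convert Real.geom_mean_le_arith_mean2_weighted (w₁ := s / (s + t)) (w₂ := t / (s + t))
      (by positivity) (by positivity) hx hy (by field_simp) using 1
    ring
  calc x ^ s * y ^ t
      = (x ^ (s / (s + t) : ℝ) * y ^ (t / (s + t) : ℝ)) ^ (s + t) := by
        rw [mul_pow, rpow_div_pow x s hx, rpow_div_pow y t hy]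
    _ ≤ ((s * x + t * y) / (s + t)) ^ (s + t) := pow_le_pow_left₀ (by positivity) amgm _

theorem pow_mul_pow_le_lam0_mul_add_pow (s t : ℕ) {a b : ℝ} (ha : 0 ≤ a) (hb : 0 ≤ b) :
    a ^ s * b ^ t ≤ lam0 s t * (a + b) ^ (s + t) := by
  -- Both facts survive `r = 0`, where `z / r = 0`.
  have pow_eq (z : ℝ) (r : ℕ) : z ^ r = (r : ℝ) ^ r * (z / r) ^ r := by
    obtain rfl | hr := eq_or_ne r 0
    · simp
    · rw [← mul_pow, mul_div_cancel₀ _ (Nat.cast_ne_zero.mpr hr)]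
  have mul_div_le (z : ℝ) (r : ℕ) (hz : 0 ≤ z) : r * (z / r) ≤ z := by
    obtain rfl | hr := eq_or_ne r 0
    · simpa using hz
    · exact (mul_div_cancel₀ _ (Nat.cast_ne_zero.mpr hr)).le
  calc a ^ s * b ^ t
      = (s : ℝ) ^ s * (t : ℝ) ^ t * ((a / s) ^ s * (b / t) ^ t) := by
        rw [pow_eq a s, pow_eq b t]; ring
    _ ≤ (s : ℝ) ^ s * (t : ℝ) ^ t * ((s * (a / s) + t * (b / t)) / (s + t)) ^ (s + t) := by
        gcongr
        exact pow_mul_pow_le_weighted_mean_pow s t (by positivity) (by positivity)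
    _ ≤ (s : ℝ) ^ s * (t : ℝ) ^ t * ((a + b) / (s + t)) ^ (s + t) := by
        gcongr
        exacts [mul_div_le a s ha, mul_div_le b t hb]
    _ = lam0 s t * (a + b) ^ (s + t) := by rw [lam0, div_pow]; ring

theorem lam0_nonneg (k l : ℕ) : 0 ≤ lam0 k l := by
  unfold lam0
  positivity

section StarCounting

variable {V : Type*}

/-- The vertices `u ∈ Z` joined to `v` by the arc `v → u` alone: the possible out-leaves in `Z` of
an induced star with centre `v`. In an oriented graph this is `N⁺(v) ∩ Z`. -/
def strictOutNbrs (A : V → V → Prop) (Z : Set V) (v : V) : Set V :=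
  {u | u ∈ Z ∧ A v u ∧ ¬ A u v}

/-- The vertices `u ∈ Z` joined to `v` by the arc `u → v` alone: the possible in-leaves in `Z` of
an induced star with centre `v`. In an oriented graph this is `N⁻(v) ∩ Z`. -/
def strictInNbrs (A : V → V → Prop) (Z : Set V) (v : V) : Set V :=
  {u | u ∈ Z ∧ A u v ∧ ¬ A v u}

/-- The ordered pairs of adjacent vertices of `Z`; an edge joining distinct vertices
occurs twice. -/
def adjPairs (A : V → V → Prop) (Z : Set V) : Set (V × V) :=
  {p | p.1 ∈ Z ∧ p.2 ∈ Z ∧ (A p.1 p.2 ∨ A p.2 p.1)}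

/-- The induced copies of `S_{k,l}` inside `Z`, as labelled embeddings. -/
def starEmbIn (k l : ℕ) (A : V → V → Prop) (Z : Set V) : Set (Fin (k + l + 1) → V) :=
  {φ | IsStarEmb k l A φ ∧ ∀ a, φ a ∈ Z}

/-- The image of the centre of the star, as an element of `Z`. -/
def starEmbIn.center {k l : ℕ} {A : V → V → Prop} {Z : Set V} (φ : starEmbIn k l A Z) : Z :=
  ⟨φ.1 0, φ.2.2 0⟩

variable {k l : ℕ} {A : V → V → Prop} {Z : Set V}

theorem outLeaf_mem_strictOutNbrs (φ : starEmbIn k l A Z) (i : Fin k) :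
    φ.1 (i.castAdd l).succ ∈ strictOutNbrs A Z (starEmbIn.center φ) :=
  ⟨φ.2.2 _, (φ.2.1.2 _ _).mp (by simp [StarArc]), mt (φ.2.1.2 _ _).mpr (by simp [StarArc])⟩

theorem inLeaf_mem_strictInNbrs (φ : starEmbIn k l A Z) (j : Fin l) :
    φ.1 (j.natAdd k).succ ∈ strictInNbrs A Z (starEmbIn.center φ) :=
  ⟨φ.2.2 _, (φ.2.1.2 _ _).mp (by simp [StarArc]), mt (φ.2.1.2 _ _).mpr (by simp [StarArc])⟩

theorem card_starEmbIn_center_eq_le [Finite V] (v : Z) :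
    Nat.card {φ : starEmbIn k l A Z // starEmbIn.center φ = v} ≤
      Nat.card (strictOutNbrs A Z v) ^ k * Nat.card (strictInNbrs A Z v) ^ l := by
  let leaves (φ : {φ : starEmbIn k l A Z // starEmbIn.center φ = v}) :
      (Fin k → strictOutNbrs A Z v) × (Fin l → strictInNbrs A Z v) :=
    (fun i ↦ ⟨φ.1.1 _, φ.2 ▸ outLeaf_mem_strictOutNbrs φ.1 i⟩,
      fun j ↦ ⟨φ.1.1 _, φ.2 ▸ inLeaf_mem_strictInNbrs φ.1 j⟩)
  have leaves_injective : Function.Injective leaves := by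
    intro φ ψ h
    refine Subtype.ext (Subtype.ext (funext fun a ↦ ?_))
    induction a using Fin.cases with
    | zero => exact congrArg Subtype.val (φ.2.trans ψ.2.symm)
    | succ a =>
      induction a using Fin.addCases with
      | left i => exact congrArg Subtype.val (congrFun (congrArg Prod.fst h) i)
      | right j => exact congrArg Subtype.val (congrFun (congrArg Prod.snd h) j)
  simpa only [Nat.card_prod, Nat.card_fun, Nat.card_fin] using
    Nat.card_le_card_of_injective leaves leaves_injective

theorem card_starEmbIn_le_sum [Finite V] [Fintype Z] :
    Nat.card (starEmbIn k l A Z) ≤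
      ∑ v : Z, Nat.card (strictOutNbrs A Z v) ^ k * Nat.card (strictInNbrs A Z v) ^ l :=
  calc Nat.card (starEmbIn k l A Z)
      = Nat.card (Σ v : Z, {φ : starEmbIn k l A Z // starEmbIn.center φ = v}) :=
        (Nat.card_congr (Equiv.sigmaFiberEquiv starEmbIn.center)).symm
    _ = ∑ v : Z, Nat.card {φ : starEmbIn k l A Z // starEmbIn.center φ = v} := Nat.card_sigma
    _ ≤ _ := Finset.sum_le_sum fun v _ ↦ card_starEmbIn_center_eq_le v

theorem card_strictOutNbrs_add_card_strictInNbrs_le [Finite V] (v : V) :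
    Nat.card (strictOutNbrs A Z v) + Nat.card (strictInNbrs A Z v) ≤
      Nat.card {u : V // (A v u ∨ A u v) ∧ u ∈ Z} := by
  have disjoint : Disjoint (strictOutNbrs A Z v) (strictInNbrs A Z v) :=
    Set.disjoint_left.mpr fun _ hout hin ↦ hout.2.2 hin.2.1
  have union_subset : strictOutNbrs A Z v ∪ strictInNbrs A Z v ⊆
      {u | (A v u ∨ A u v) ∧ u ∈ Z} := by
    rintro u (hu | hu)
    exacts [⟨.inl hu.2.1, hu.1⟩, ⟨.inr hu.2.1, hu.1⟩]
  exact (Set.ncard_union_eq disjoint).symm.trans_le (Set.ncard_le_ncard union_subset)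

theorem sum_card_strictOutNbrs_eq_sum_card_strictInNbrs [Finite V] [Fintype Z] :
    ∑ v : Z, Nat.card (strictOutNbrs A Z v) = ∑ v : Z, Nat.card (strictInNbrs A Z v) := by
  rw [← Nat.card_sigma, ← Nat.card_sigma]
  exact Nat.card_congr
    { toFun := fun x ↦ ⟨⟨x.2, x.2.2.1⟩, x.1, x.1.2, x.2.2.2⟩
      invFun := fun x ↦ ⟨⟨x.2, x.2.2.1⟩, x.1, x.1.2, x.2.2.2⟩ }

theorem sum_card_nbrs_eq_card_adjPairs [Finite V] [Fintype Z] :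
    ∑ v : Z, Nat.card {u : V // (A v u ∨ A u v) ∧ u ∈ Z} =
      Nat.card (adjPairs A Z) := by
  rw [← Nat.card_sigma]
  exact Nat.card_congr
    { toFun := fun x ↦ ⟨(x.1, x.2), x.1.2, x.2.2.2, x.2.2.1⟩
      invFun := fun p ↦ ⟨⟨p.1.1, p.2.1⟩, p.1.2, p.2.2.2, p.2.2.1⟩ }

theorem two_mul_sum_card_strictOutNbrs_le_card_adjPairs [Finite V] [Fintype Z] :
    2 * ∑ v : Z, Nat.card (strictOutNbrs A Z v) ≤
      Nat.card (adjPairs A Z) :=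
  calc 2 * ∑ v : Z, Nat.card (strictOutNbrs A Z v)
      = ∑ v : Z, (Nat.card (strictOutNbrs A Z v) + Nat.card (strictInNbrs A Z v)) := by
        rw [Finset.sum_add_distrib, ← sum_card_strictOutNbrs_eq_sum_card_strictInNbrs, two_mul]
    _ ≤ ∑ v : Z, Nat.card {u : V // (A v u ∨ A u v) ∧ u ∈ Z} :=
        Finset.sum_le_sum fun v _ ↦ card_strictOutNbrs_add_card_strictInNbrs_le v.1
    _ = _ := sum_card_nbrs_eq_card_adjPairs

variable [Fintype V]

theorem rhoIn_nonneg (A : V → V → Prop) (Z : Set V) (v : V) : 0 ≤ rhoIn A Z v := by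
  unfold rhoIn
  positivity

theorem rhoIn_pow_le_sSup {v : V} (hv : v ∈ Z) (r : ℕ) :
    rhoIn A Z v ^ r ≤ sSup ((fun z ↦ rhoIn A Z z ^ r) '' Z) :=
  le_csSup (Set.toFinite _).bddAbove (Set.mem_image_of_mem _ hv)

theorem sSup_rhoIn_pow_nonneg (A : V → V → Prop) (Z : Set V) (r : ℕ) :
    0 ≤ sSup ((fun z ↦ rhoIn A Z z ^ r) '' Z) :=
  Real.sSup_nonneg (Set.forall_mem_image.mpr fun z _ ↦ pow_nonneg (rhoIn_nonneg A Z z) r)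

theorem card_strictOutNbrs_add_card_strictInNbrs_le_rhoIn_mul (v : V) :
    (Nat.card (strictOutNbrs A Z v) + Nat.card (strictInNbrs A Z v) : ℝ) ≤
      rhoIn A Z v * Fintype.card V := by
  have : Nonempty V := ⟨v⟩
  rw [rhoIn, div_mul_cancel₀ _ (Nat.cast_ne_zero.mpr Fintype.card_ne_zero)]
  exact_mod_cast card_strictOutNbrs_add_card_strictInNbrs_le v

theorem card_strictOutNbrs_pow_mul_card_strictInNbrs_pow_le (k l : ℕ) {v : V} (hv : v ∈ Z) :
    (Nat.card (strictOutNbrs A Z v) : ℝ) ^ k * (Nat.card (strictInNbrs A Z v) : ℝ) ^ l ≤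
      lam0 k l * (sSup ((fun z ↦ rhoIn A Z z ^ (k + l)) '' Z) *
        (Fintype.card V : ℝ) ^ (k + l)) := by
  refine (pow_mul_pow_le_lam0_mul_add_pow k l (Nat.cast_nonneg _) (Nat.cast_nonneg _)).trans
    (mul_le_mul_of_nonneg_left ?_ (lam0_nonneg k l))
  calc (Nat.card (strictOutNbrs A Z v) + Nat.card (strictInNbrs A Z v) : ℝ) ^ (k + l)
      ≤ (rhoIn A Z v * Fintype.card V) ^ (k + l) := by
        gcongr
        exact card_strictOutNbrs_add_card_strictInNbrs_le_rhoIn_mul v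
    _ = rhoIn A Z v ^ (k + l) * (Fintype.card V : ℝ) ^ (k + l) := mul_pow _ _ _
    _ ≤ _ := by
        gcongr
        exact rhoIn_pow_le_sSup hv _

theorem card_starEmbIn_succ_le (k l : ℕ) (A : V → V → Prop) (Z : Set V) :
    (Nat.card (starEmbIn (k + 1) l A Z) : ℝ) ≤
      (Nat.card (adjPairs A Z) : ℝ) / 2 *
        (lam0 k l * (sSup ((fun z ↦ rhoIn A Z z ^ (k + l)) '' Z) *
          (Fintype.card V : ℝ) ^ (k + l))) := by
  have := Fintype.ofFinite Z
  set B : ℝ := lam0 k l * (sSup ((fun z ↦ rhoIn A Z z ^ (k + l)) '' Z) *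
    (Fintype.card V : ℝ) ^ (k + l))
  have hB : 0 ≤ B := mul_nonneg (lam0_nonneg k l)
    (mul_nonneg (sSup_rhoIn_pow_nonneg A Z _) (by positivity))
  calc (Nat.card (starEmbIn (k + 1) l A Z) : ℝ)
      ≤ ∑ v : Z, (Nat.card (strictOutNbrs A Z v) : ℝ) ^ (k + 1) *
          (Nat.card (strictInNbrs A Z v) : ℝ) ^ l := by
        exact_mod_cast card_starEmbIn_le_sum
    _ ≤ ∑ v : Z, Nat.card (strictOutNbrs A Z v) * B := by
        refine Finset.sum_le_sum fun v _ ↦ ?_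
        rw [pow_succ', mul_assoc]
        gcongr
        exact card_strictOutNbrs_pow_mul_card_strictInNbrs_pow_le k l v.2
    _ = (∑ v : Z, (Nat.card (strictOutNbrs A Z v) : ℝ)) * B := (Finset.sum_mul ..).symm
    _ ≤ _ := by
        gcongr
        rw [le_div_iff₀' two_pos]
        exact_mod_cast two_mul_sum_card_strictOutNbrs_le_card_adjPairs

theorem card_adjPairs_div_sq_le_muSet_sq_mul_densSet (A : V → V → Prop) (hZ : 2 ≤ Nat.card Z) :
    (Nat.card (adjPairs A Z) : ℝ) / (Fintype.card V : ℝ) ^ 2 ≤ muSet Z ^ 2 * densSet A Z := by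
  have hz : (2 : ℝ) ≤ Nat.card Z := by exact_mod_cast hZ
  have hz₁ : (0 : ℝ) < Nat.card Z - 1 := by linarith
  set T : ℝ := (Nat.card (adjPairs A Z) : ℝ)
  have one_le : (1 : ℝ) ≤ Nat.card Z / (Nat.card Z - 1) := by
    rw [one_le_div hz₁]
    linarith
  calc T / (Fintype.card V : ℝ) ^ 2
      ≤ T / (Fintype.card V : ℝ) ^ 2 * (Nat.card Z / (Nat.card Z - 1)) :=
        le_mul_of_one_le_right (by positivity) one_le
    _ = muSet Z ^ 2 * (T / 2 / (Nat.card Z).choose 2) := by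
        rw [muSet, Nat.cast_choose_two]
        field_simp
    _ = muSet Z ^ 2 * densSet A Z := rfl

end StarCounting

theorem stmt18_general (k l : ℕ) (hk : 1 ≤ k) {V : Type*} [Fintype V] (A : V → V → Prop)
    (Z : Set V) (hZ : 2 ≤ Nat.card Z) :
    starProbOn k l A (fun φ ↦ ∀ a, φ a ∈ Z)
      ≤ (((k : ℝ) - 1) ^ (k - 1) * (l : ℝ) ^ l / ((k : ℝ) + l - 1) ^ (k + l - 1))
          * muSet Z ^ 2 * (densSet A Z / 2)
          * sSup ((fun z ↦ rhoIn A Z z ^ (k + l - 1)) '' Z) := by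
  obtain ⟨k, rfl⟩ := Nat.exists_eq_add_of_le' hk
  have hV : (Fintype.card V : ℝ) ≠ 0 := by
    have : Nonempty Z := (Nat.card_pos_iff.mp (by omega)).1
    have : Nonempty V := .map Subtype.val this
    exact Nat.cast_ne_zero.mpr Fintype.card_ne_zero
  have exponent : k + 1 + l - 1 = k + l := by omega
  have coeff : (((k + 1 : ℕ) : ℝ) - 1) ^ (k + 1 - 1) * (l : ℝ) ^ l /
      (((k + 1 : ℕ) : ℝ) + l - 1) ^ (k + l) = lam0 k l := by
    rw [lam0, Nat.add_sub_cancel]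
    push_cast
    ring_nf
  rw [exponent, coeff]
  set M : ℝ := sSup ((fun z ↦ rhoIn A Z z ^ (k + l)) '' Z)
  set T : ℝ := (Nat.card (adjPairs A Z) : ℝ)
  calc starProbOn (k + 1) l A (fun φ ↦ ∀ a, φ a ∈ Z)
      ≤ T / 2 * (lam0 k l * (M * (Fintype.card V : ℝ) ^ (k + l))) /
          (Fintype.card V : ℝ) ^ (k + 1 + l + 1) := by
        unfold starProbOn
        gcongr
        exact card_starEmbIn_succ_le k l A Z
    _ = lam0 k l * (T / (Fintype.card V : ℝ) ^ 2 / 2) * M := by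
        field_simp
        ring
    _ ≤ lam0 k l * (muSet Z ^ 2 * densSet A Z / 2) * M := by
        gcongr
        exacts [sSup_rhoIn_pow_nonneg A Z _, lam0_nonneg k l,
          card_adjPairs_div_sq_le_muSet_sq_mul_densSet A hZ]
    _ = _ := by ring

theorem stmt18 (k l : ℕ) (hl : 1 ≤ l) (hlk : l ≤ k) (hm : 6 ≤ k + l)
    (V : Type) [Fintype V] (A : V → V → Prop)
    (hirr : Irreflexive A) (hopp : ∀ u v, A u v → ¬ A v u) (hn : 1 ≤ Fintype.card V)
    (Z : Set V) (hZ : 2 ≤ Nat.card Z) :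
    starProbOn k l A (fun φ => ∀ a, φ a ∈ Z)
      ≤ (((k : ℝ) - 1) ^ (k - 1) * (l : ℝ) ^ l / ((k : ℝ) + l - 1) ^ (k + l - 1))
          * muSet Z ^ 2 * (densSet A Z / 2)
          * sSup ((fun z => rhoIn A Z z ^ (k + l - 1)) '' Z) := by
  exact stmt18_general k l (hl.trans hlk) A Z hZ
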